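/- A function f : [0,1] → ℝ is uniformly continuous on [0,1] if and only if the composition f ∘ Φ : ({0,1,2})^ℕ → ℝ is uniformly continuous, i.e., there exists ω : ℕ → ℕ such that for all k and all α, β : ℕ → {0,1,2} with ᾱω(k) = β̄ω(k), one has |f(Φ(α)) − f(Φ(β))| ≤ 2^(−k). -/

import Mathlib

open Filter
/-- `triN s` : numbering of the nodes of the ternary tree:
`N(⟨⟩) = 1`, `N(s * ⟨i⟩) = 2 * N(s) + i - 1`. -/
def triN (s : List (Fin 3)) : ℕ := s.foldl (fun a i => 2 * a + i.val - 1) 1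

/-- Initial segment of length `n` of `α`. -/
def seg3 (α : ℕ → Fin 3) (n : ℕ) : List (Fin 3) := List.ofFn fun i : Fin n => α i

/-- `Phi α` is the limit of the Cauchy sequence `x_α^n = 2^(-(n+1)) * N(ᾱ n)`. -/
noncomputable def Phi (α : ℕ → Fin 3) : ℝ :=
  limUnder atTop fun n => (triN (seg3 α n) : ℝ) / 2 ^ (n + 1)

/-- `f : [0,1] → ℝ` is uniformly continuous on the unit interval, with a modulus `ω`. -/
def UnifContOn (f : ℝ → ℝ) : Prop :=
  ∃ ω : ℕ → ℕ, ∀ k : ℕ, ∀ x ∈ Set.Icc (0 : ℝ) 1, ∀ y ∈ Set.Icc (0 : ℝ) 1,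
    |x - y| ≤ 1 / 2 ^ ω k → |f x - f y| ≤ 1 / 2 ^ k

lemma seg3_succ (α : ℕ → Fin 3) (n : ℕ) : seg3 α (n+1) = seg3 α n ++ [α n] := by
  simp [seg3, List.ofFn_succ_last, -List.ofFn_succ]

lemma triN_snoc (s : List (Fin 3)) (i : Fin 3) : triN (s ++ [i]) = 2 * triN s + i.val - 1 := by
  simp [triN]

lemma triN_pos (α : ℕ → Fin 3) (n : ℕ) : 1 ≤ triN (seg3 α n) := by
  induction n with
  | zero => simp [seg3, triN]
  | succ n ih => rw [seg3_succ, triN_snoc]; omega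

lemma triN_eq (α : ℕ → Fin 3) (n : ℕ) :
    (triN (seg3 α n) : ℝ) / 2 ^ (n + 1)
      = (∑ i ∈ Finset.range n, ((α i).val : ℝ) / 2 ^ (i + 2)) + 1 / 2 ^ (n + 1) := by
  induction n with
  | zero => simp [seg3, triN]
  | succ n ih =>
    have h := triN_pos α n
    rw [Finset.sum_range_succ, seg3_succ, triN_snoc, Nat.cast_sub (by omega)]
    rw [← sub_eq_iff_eq_add] at ih
    rw [← ih]
    push_cast
    field_simp
    ring

lemma term_le (α : ℕ → Fin 3) (i : ℕ) :
    ((α i).val : ℝ) / 2 ^ (i + 2) ≤ (1 / 2) / 2 ^ i := by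
  have h : (α i).val ≤ 2 := by omega
  have h' : ((α i).val : ℝ) ≤ 2 := by exact_mod_cast h
  rw [pow_add, div_le_div_iff₀ (by positivity) (by positivity)]
  nlinarith [show (0:ℝ) < 2 ^ i by positivity]

lemma summ (α : ℕ → Fin 3) : Summable fun i => ((α i).val : ℝ) / 2 ^ (i + 2) := by
  refine Summable.of_nonneg_of_le (fun i => by positivity) (term_le α) ?_
  have := summable_geometric_two' (1 : ℝ)
  simpa using this

lemma Phi_eq (α : ℕ → Fin 3) : Phi α = ∑' i, ((α i).val : ℝ) / 2 ^ (i + 2) := by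
  refine Tendsto.limUnder_eq ?_
  simp_rw [triN_eq]
  have h1 := (summ α).hasSum.tendsto_sum_nat
  have h2 : Tendsto (fun n : ℕ => (1 : ℝ) / 2 ^ (n + 1)) atTop (nhds 0) := by
    have := (tendsto_pow_atTop_nhds_zero_of_lt_one (r := (1/2 : ℝ)) (by norm_num) (by norm_num))
    have := (tendsto_add_atTop_iff_nat 1).2 this
    simpa [div_pow] using this
  simpa using h1.add h2

lemma Phi_mem (α : ℕ → Fin 3) : Phi α ∈ Set.Icc (0 : ℝ) 1 := by
  rw [Phi_eq]
  refine ⟨tsum_nonneg fun i => by positivity, ?_⟩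
  have := (summ α).tsum_le_tsum (term_le α) (by simpa using summable_geometric_two' (1 : ℝ))
  have h2 := tsum_geometric_two' (1 : ℝ)
  linarith

lemma Phi_shift (α : ℕ → Fin 3) :
    Phi α = ((α 0).val : ℝ) / 4 + Phi (fun n => α (n + 1)) / 2 := by
  rw [Phi_eq, Phi_eq, (summ α).tsum_eq_zero_add, ← tsum_div_const]
  congr 1
  · norm_num
  · congr 1; ext i; rw [div_div]; ring

lemma Phi_surj (x : ℝ) (hx : x ∈ Set.Icc (0 : ℝ) 1) : ∃ α, Phi α = x := by
  obtain ⟨d, -, hd⟩ := Real.ofDigits_SurjOn (b := 2) (by norm_num) hx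
  refine ⟨fun n => if d n = 0 then 0 else 2, ?_⟩
  rw [Phi_eq, ← hd, Real.ofDigits]
  congr 1; ext i
  rw [Real.ofDigitsTerm]
  generalize d i = e
  fin_cases e
  · simp
  · simp; field_simp; ring

lemma seg3_iff (α β : ℕ → Fin 3) (n : ℕ) : seg3 α n = seg3 β n ↔ ∀ i < n, α i = β i := by
  rw [seg3, seg3, List.ofFn_inj, funext_iff]
  exact ⟨fun h i hi => h ⟨i, hi⟩, fun h i => h i i.2⟩

lemma Phi_close (n : ℕ) : ∀ α β : ℕ → Fin 3, (∀ i < n, α i = β i) →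
    |Phi α - Phi β| ≤ 1 / 2 ^ n := by
  induction n with
  | zero =>
    intro α β _
    have := Phi_mem α
    have := Phi_mem β
    simp only [Set.mem_Icc] at *
    rw [abs_le]; constructor <;> norm_num <;> linarith
  | succ n ih =>
    intro α β h
    have := ih (fun n => α (n+1)) (fun n => β (n+1)) (fun i hi => h (i+1) (by omega))
    rw [Phi_shift α, Phi_shift β, h 0 (by omega), add_sub_add_left_eq_sub, ← sub_div, abs_div,
      pow_succ, ← div_div, abs_two]
    linarith

lemma Phi_lift (n : ℕ) : ∀ x ∈ Set.Icc (0 : ℝ) 1, ∀ y ∈ Set.Icc (0 : ℝ) 1,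
    |x - y| ≤ 1 / 2 ^ (n + 1) →
    ∃ α β : ℕ → Fin 3, (∀ i < n, α i = β i) ∧ Phi α = x ∧ Phi β = y := by
  induction n with
  | zero =>
    intro x hx y hy _
    obtain ⟨α, h⟩ := Phi_surj x hx
    obtain ⟨β, h'⟩ := Phi_surj y hy
    exact ⟨α, β, by simp, h, h'⟩
  | succ n ih =>
    intro x hx y hy hxy
    have h4 : |x - y| ≤ 1 / 4 := by
      refine hxy.trans ?_
      have : (1 : ℝ) ≤ 2 ^ n := one_le_pow₀ (by norm_num)
      rw [div_le_div_iff₀ (by positivity) (by positivity)]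
      rw [pow_succ, pow_succ]; linarith
    rw [abs_le] at h4
    have hi : ∃ i : Fin 3, 2 * (x - (i.val : ℝ) / 4) ∈ Set.Icc (0 : ℝ) 1 ∧
        2 * (y - (i.val : ℝ) / 4) ∈ Set.Icc (0 : ℝ) 1 := by
      obtain ⟨hx0, hx1⟩ := hx
      obtain ⟨hy0, hy1⟩ := hy
      by_cases h1 : x ≤ 1 / 2 ∧ y ≤ 1 / 2
      · exact ⟨0, by constructor <;> constructor <;> norm_num <;> linarith [h1.1, h1.2]⟩
      by_cases h2 : 1 / 2 ≤ x ∧ 1 / 2 ≤ y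
      · exact ⟨2, by constructor <;> constructor <;> norm_num <;> linarith [h2.1, h2.2]⟩
      refine ⟨1, ?_⟩
      have : (x < 1 / 2 ∧ 1 / 2 < y) ∨ (y < 1 / 2 ∧ 1 / 2 < x) := by grind
      rcases this with h | h <;> constructor <;> constructor <;> norm_num <;>
        linarith [h.1, h.2, h4.1, h4.2]
    obtain ⟨i, hix, hiy⟩ := hi
    obtain ⟨α, β, hab, ha, hb⟩ := ih _ hix _ hiy (by
      rw [← mul_sub, sub_sub_sub_cancel_right, abs_mul, abs_two]
      rw [pow_succ, ← div_div] at hxy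
      linarith)
    refine ⟨fun n => Nat.casesOn n i α, fun n => Nat.casesOn n i β, ?_, ?_, ?_⟩
    · rintro (_ | j) hj
      · rfl
      · exact hab j (by omega)
    · rw [Phi_shift]
      change (i.val : ℝ) / 4 + Phi α / 2 = x
      rw [ha]; ring
    · rw [Phi_shift]
      change (i.val : ℝ) / 4 + Phi β / 2 = y
      rw [hb]; ring

theorem stmt9 (f : ℝ → ℝ) :
    UnifContOn f ↔
      ∃ ω : ℕ → ℕ, ∀ (k : ℕ) (α β : ℕ → Fin 3),
        seg3 α (ω k) = seg3 β (ω k) → |f (Phi α) - f (Phi β)| ≤ 1 / 2 ^ k := by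
  constructor
  · rintro ⟨ω, h⟩
    exact ⟨ω, fun k α β hab => h k _ (Phi_mem α) _ (Phi_mem β)
      (Phi_close _ _ _ ((seg3_iff _ _ _).1 hab))⟩
  · rintro ⟨ω, h⟩
    refine ⟨fun k => ω k + 1, fun k x hx y hy hxy => ?_⟩
    obtain ⟨α, β, hab, rfl, rfl⟩ := Phi_lift (ω k) x hx y hy hxy
    exact h k α β ((seg3_iff _ _ _).2 hab)
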